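/- arXiv:2401.16884 — 5 statements merged into one kernel-verified Lean document; each statement's English description precedes it below -/
import Mathlib

section
/- For every n ≥ 1 and every complex matrix M indexed by (Fin n → Fin 2), the uniform n-qubit Pauli-string twirl equals the trace part of M: (1/4^n) • ∑ over all v : Fin n → Fin 4 of (P v) * M * (P v) = ((Matrix.trace M)/2^n) • 1. -/
open Matrix Complex

/-- The single-qubit Pauli matrices. -/
noncomputable def pauli : Fin 4 → Matrix (Fin 2) (Fin 2) ℂ
  | 0 => !![1,0;0,1]
  | 1 => !![0,1;1,0]
  | 2 => !![0,-Complex.I;Complex.I,0]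
  | 3 => !![1,0;0,-1]

/-- The `n`-qubit Pauli string indexed by `v : Fin n → Fin 4`. -/
noncomputable def pauliString {n : ℕ} (v : Fin n → Fin 4) :
    Matrix (Fin n → Fin 2) (Fin n → Fin 2) ℂ :=
  Matrix.of fun i j => ∏ k, pauli (v k) (i k) (j k)

/-- Single-qubit completeness relation. -/
theorem pauli_complete (i j k l : Fin 2) :
    ∑ a : Fin 4, pauli a i j * pauli a k l = if i = l ∧ j = k then 2 else 0 := by
  fin_cases i <;> fin_cases j <;> fin_cases k <;> fin_cases l <;>
    simp [Fin.sum_univ_four, pauli] <;> norm_num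

theorem pauliString_complete {n : ℕ} (i j k l : Fin n → Fin 2) :
    ∑ v : Fin n → Fin 4, pauliString v i j * pauliString v k l
      = if i = l ∧ j = k then 2 ^ n else 0 := by
  simp only [pauliString, Matrix.of_apply, ← Finset.prod_mul_distrib]
  rw [← Fintype.prod_sum (fun (t : Fin n) (a : Fin 4) => pauli a (i t) (j t) * pauli a (k t) (l t))]
  simp only [pauli_complete]
  split_ifs with h
  · obtain ⟨rfl, rfl⟩ := h
    simp
  · have : ∃ t, ¬ (i t = l t ∧ j t = k t) := by
      by_contra! hc
      exact h ⟨funext fun t => (hc t).1, funext fun t => (hc t).2⟩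
    obtain ⟨t, ht⟩ := this
    exact Finset.prod_eq_zero (Finset.mem_univ t) (if_neg ht)

/-- The uniform `n`-qubit Pauli-string twirl of any matrix equals its trace part. -/
theorem pauli_string_twirl (n : ℕ) (hn : 1 ≤ n)
    (M : Matrix (Fin n → Fin 2) (Fin n → Fin 2) ℂ) :
    (1/4^n : ℂ) • ∑ v : Fin n → Fin 4, pauliString v * M * pauliString v
      = ((Matrix.trace M)/2^n) • (1 : Matrix (Fin n → Fin 2) (Fin n → Fin 2) ℂ) := by
  have key : ∑ v : Fin n → Fin 4, pauliString v * M * pauliString v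
      = (2 ^ n * Matrix.trace M) • (1 : Matrix (Fin n → Fin 2) (Fin n → Fin 2) ℂ) := by
    ext i l
    have h1 : (∑ v : Fin n → Fin 4, pauliString v * M * pauliString v) i l
        = ∑ k, ∑ j, M j k * ∑ v : Fin n → Fin 4, pauliString v i j * pauliString v k l := by
      simp only [Matrix.sum_apply, Matrix.mul_apply, Finset.sum_mul, Finset.mul_sum]
      rw [Finset.sum_comm]
      refine Finset.sum_congr rfl fun k _ => ?_
      rw [Finset.sum_comm]
      refine Finset.sum_congr rfl fun j _ => Finset.sum_congr rfl fun v _ => ?_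
      ring
    rw [h1]
    simp only [pauliString_complete, Matrix.smul_apply, Matrix.one_apply, smul_eq_mul]
    by_cases h : i = l
    · simp [h, Matrix.trace, Finset.mul_sum, mul_comm]
    · simp [h]
  rw [key, smul_smul]
  congr 1
  have h4 : (4 : ℂ) ^ n = 2 ^ n * 2 ^ n := by rw [← mul_pow]; norm_num
  rw [h4]
  field_simp
end

section
/- Any two n-qubit Pauli strings either commute or anti-commute: for all v w : Fin n → Fin 4, either (P v) * (P w) = (P w) * (P v) or (P v) * (P w) = -((P w) * (P v)). -/
open Matrix Complex

/-- Single-qubit Pauli matrices commute up to a sign. -/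
lemma pauli_sign (a b : Fin 4) : ∃ s : ℂ, (s = 1 ∨ s = -1) ∧
    pauli a * pauli b = s • (pauli b * pauli a) := by
  have key : pauli a * pauli b = pauli b * pauli a ∨
      pauli a * pauli b = -(pauli b * pauli a) := by
    fin_cases a <;> fin_cases b <;> simp [pauli]
  rcases key with h | h
  · exact ⟨1, Or.inl rfl, by rw [h, one_smul]⟩
  · exact ⟨-1, Or.inr rfl, by rw [h, neg_one_smul]⟩

/-- Products of Pauli strings are computed sitewise. -/
lemma pauliString_mul_apply {n : ℕ} (v w : Fin n → Fin 4) (i j : Fin n → Fin 2) :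
    (pauliString v * pauliString w) i j = ∏ k, (pauli (v k) * pauli (w k)) (i k) (j k) := by
  simp only [Matrix.mul_apply, pauliString, Matrix.of_apply, ← Finset.prod_mul_distrib]
  rw [Finset.prod_univ_sum, Fintype.piFinset_univ]

/-- Any two `n`-qubit Pauli strings either commute or anti-commute. -/
theorem pauli_string_comm_or_anticomm (n : ℕ) (v w : Fin n → Fin 4) :
    pauliString v * pauliString w = pauliString w * pauliString v ∨
    pauliString v * pauliString w = -(pauliString w * pauliString v) := by
  choose s hs h using fun k => pauli_sign (v k) (w k)
  have hmul : pauliString v * pauliString w =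
      (∏ k, s k) • (pauliString w * pauliString v) := by
    ext i j
    rw [Matrix.smul_apply, pauliString_mul_apply, pauliString_mul_apply, smul_eq_mul,
      ← Finset.prod_mul_distrib]
    refine Finset.prod_congr rfl fun k _ => ?_
    rw [h k, Matrix.smul_apply, smul_eq_mul]
  have hprod : (∏ k, s k) = 1 ∨ (∏ k, s k) = -1 := by
    rw [← sq_eq_one_iff, ← Finset.prod_pow]
    exact Finset.prod_eq_one fun k _ => sq_eq_one_iff.2 (hs k)
  rcases hprod with h1 | h1
  · left; rw [hmul, h1, one_smul]
  · right; rw [hmul, h1, neg_one_smul]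
end

section
/- Signed single-qubit Pauli twirl: fix a non-identity Pauli matrix σ' ∈ {X, Y, Z}. For every complex 2×2 matrix M, (1/4)·∑ over v ∈ {0,1,2,3} of s(σ_v, σ') • (σ_v * M * σ_v) = ((Matrix.trace (σ' * M))/2) • σ', where s(P,Q) = 1 if P*Q = Q*P and s(P,Q) = -1 otherwise. -/
open Matrix Complex

/-- The sign `s(P,Q)`: `1` if `P` and `Q` commute, `-1` otherwise. -/
noncomputable def sgn (P Q : Matrix (Fin 2) (Fin 2) ℂ) : ℂ :=
  if P * Q = Q * P then 1 else -1

theorem sgn_pauli (u v : Fin 4) :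
    sgn (pauli u) (pauli v) = if u = 0 ∨ v = 0 ∨ u = v then 1 else -1 := by
  have h1 : (-1 : ℂ) ≠ 1 := by norm_num
  have h2 : (1 : ℂ) ≠ -1 := by norm_num
  have h3 : Complex.I ≠ -Complex.I := by
    intro h
    have := congrArg Complex.im h
    norm_num at this
  have h4 : -Complex.I ≠ Complex.I := fun h => h3 h.symm
  fin_cases u <;> fin_cases v <;> simp [sgn, pauli, h1, h2, h3, h4]

/-- Signed single-qubit Pauli twirl against a fixed non-identity Pauli `σ'`. -/
theorem signed_pauli_twirl (σ' : Matrix (Fin 2) (Fin 2) ℂ)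
    (hσ' : σ' = pauli 1 ∨ σ' = pauli 2 ∨ σ' = pauli 3)
    (M : Matrix (Fin 2) (Fin 2) ℂ) :
    (1/4 : ℂ) • ∑ v : Fin 4, sgn (pauli v) σ' • (pauli v * M * pauli v)
      = ((Matrix.trace (σ' * M))/2) • σ' := by
  rw [Matrix.eta_fin_two M]
  rcases hσ' with h | h | h <;> subst h <;>
    simp only [Fin.sum_univ_four, sgn_pauli] <;>
    ext i j <;> fin_cases i <;> fin_cases j <;>
    simp [pauli, Matrix.trace_fin_two] <;>
    ring_nf <;> (try simp only [Complex.I_sq]) <;> (try ring_nf)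
end

section
/- Robust phase estimation signal for the noisy Z rotation: let ω be a real number, k a natural number, and set Z_{π/2}(ω) = (Real.cos ((π/4)*(1+ω)) : ℂ) • 1 - (Complex.I * Real.sin ((π/4)*(1+ω))) • Z. Then Complex.normSq ((plusᴴ * (Z_{π/2}(ω))^k * plus) 0 0) = (1/2) * (1 + Real.cos (k*(π/2)*(1+ω))), where plus : Matrix (Fin 2) (Fin 1) ℂ is the column vector (1/√2, 1/√2). -/
open Matrix Complex Real

/-- Pauli `Z` matrix. -/
noncomputable def Z : Matrix (Fin 2) (Fin 2) ℂ := !![1,0;0,-1]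

/-- The `|+⟩` state as a column vector. -/
noncomputable def plus : Matrix (Fin 2) (Fin 1) ℂ :=
  Matrix.of fun _ _ => (1/Real.sqrt 2 : ℂ)

/-- Powers of the `Z` rotation by half-angle `t`. -/
lemma rot_pow (t : ℝ) (k : ℕ) :
    ((Real.cos t : ℂ) • (1 : Matrix (Fin 2) (Fin 2) ℂ) - (Complex.I * Real.sin t) • Z) ^ k
      = (Real.cos (k * t) : ℂ) • (1 : Matrix (Fin 2) (Fin 2) ℂ)
        - (Complex.I * Real.sin (k * t)) • Z := by
  induction k with
  | zero => simp
  | succ n ih =>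
    have h : ((n + 1 : ℕ) : ℝ) * t = n * t + t := by push_cast; ring
    rw [pow_succ, ih, h, Real.cos_add, Real.sin_add]
    have hI := Complex.I_mul_I
    ext i j
    fin_cases i <;> fin_cases j <;>
      simp [Z, Matrix.mul_apply, Fin.sum_univ_two] <;>
      linear_combination ((Complex.sin (n * t) * Complex.sin t) * hI)

/-- Robust phase estimation signal for the noisy `Z` rotation. -/
theorem rpe_signal_Z (ω : ℝ) (k : ℕ) :
    Complex.normSq
        ((plusᴴ *
            ((Real.cos ((π/4)*(1+ω)) : ℂ) • (1 : Matrix (Fin 2) (Fin 2) ℂ) -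
             (Complex.I * Real.sin ((π/4)*(1+ω))) • Z) ^ k *
          plus) 0 0)
      = (1/2) * (1 + Real.cos (k*(π/2)*(1+ω))) := by
  rw [rot_pow]
  have h2 : ((Real.sqrt 2 : ℝ) : ℂ) * (Real.sqrt 2 : ℝ) = 2 := by
    rw [← Complex.ofReal_mul, Real.mul_self_sqrt (by norm_num)]; norm_num
  have hi : ((Real.sqrt 2 : ℝ) : ℂ)⁻¹ * ((Real.sqrt 2 : ℝ) : ℂ)⁻¹ = 1 / 2 := by
    rw [← mul_inv, h2]; norm_num
  have key : ∀ x : ℝ, (plusᴴ * ((Real.cos x : ℂ) • (1 : Matrix (Fin 2) (Fin 2) ℂ)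
      - (Complex.I * Real.sin x) • Z) * plus) 0 0 = (Real.cos x : ℂ) := by
    intro x
    simp [Z, plus, Matrix.mul_apply, Fin.sum_univ_two]
    linear_combination (2 * Complex.cos x) * hi
  rw [key, Complex.normSq_ofReal]
  have h : (k : ℝ) * (π / 2) * (1 + ω) = 2 * (k * ((π / 4) * (1 + ω))) := by ring
  rw [h, Real.cos_two_mul]
  ring
end

section
/- Robust phase estimation signal for the noisy X rotation with tilted axis: let ξ and φ be real numbers, k a natural number, and set N = (Real.cos φ : ℂ) • X + (Real.sin φ : ℂ) • Z and X_{π/4}(ξ,φ) = (Real.cos ((π/8)*(1+ξ)) : ℂ) • 1 - (Complex.I * Real.sin ((π/8)*(1+ξ))) • N. Then Complex.normSq ((e₀ᴴ * (X_{π/4}(ξ,φ))^k * e₀) 0 0) = (1/2) * (1 + Real.cos (k*(π/4)*(1+ξ))) + (Real.sin (k*(π/8)*(1+ξ)))^2 * (Real.sin φ)^2, where e₀ : Matrix (Fin 2) (Fin 1) ℂ is the column vector (1, 0). -/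
open Matrix Complex Real

/-- Pauli matrices. -/
noncomputable def X : Matrix (Fin 2) (Fin 2) ℂ := !![0,1;1,0]
/-- The `|0⟩` state as a column vector. -/
noncomputable def e₀ : Matrix (Fin 2) (Fin 1) ℂ := !![1; 0]

/-- Powers of a rotation about the tilted axis. -/
theorem rot_pow_aux (θ φ : ℝ) (k : ℕ) :
    ((Real.cos θ : ℂ) • (1 : Matrix (Fin 2) (Fin 2) ℂ) -
      (Complex.I * Real.sin θ) • ((Real.cos φ : ℂ) • X + (Real.sin φ : ℂ) • Z)) ^ k
    = (Real.cos (k * θ) : ℂ) • (1 : Matrix (Fin 2) (Fin 2) ℂ) -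
      (Complex.I * Real.sin (k * θ)) • ((Real.cos φ : ℂ) • X + (Real.sin φ : ℂ) • Z) := by
  have hN : ((Real.cos φ : ℂ) • X + (Real.sin φ : ℂ) • Z) *
      ((Real.cos φ : ℂ) • X + (Real.sin φ : ℂ) • Z) = 1 := by
    have h : (Real.cos φ : ℂ) * Real.cos φ + (Real.sin φ : ℂ) * Real.sin φ = 1 := by
      have := Real.cos_sq_add_sin_sq φ
      rw [sq, sq] at this
      exact_mod_cast this
    ext i j
    fin_cases i <;> fin_cases j <;>
      simp [X, Z, Matrix.mul_apply, Fin.sum_univ_two, -Complex.ofReal_cos, -Complex.ofReal_sin] <;>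
      first | linear_combination h | ring
  generalize (Real.cos φ : ℂ) • X + (Real.sin φ : ℂ) • Z = N at hN ⊢
  induction k with
  | zero => simp
  | succ k ih =>
    rw [pow_succ, ih]
    have e : ((k + 1 : ℕ) : ℝ) * θ = k * θ + θ := by push_cast; ring
    rw [e, Real.cos_add, Real.sin_add]
    simp only [sub_mul, mul_sub, smul_mul_smul_comm, hN, one_mul, mul_one]
    push_cast
    have hI := Complex.I_mul_I
    match_scalars
    · linear_combination (Complex.sin (k * θ) * Complex.sin θ) * hI
    · ring

/-- Robust phase estimation signal for the noisy `X` rotation with a tilted axis. -/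
theorem rpe_signal_X (ξ φ : ℝ) (k : ℕ) :
    Complex.normSq
        ((e₀ᴴ *
            ((Real.cos ((π/8)*(1+ξ)) : ℂ) • (1 : Matrix (Fin 2) (Fin 2) ℂ) -
             (Complex.I * Real.sin ((π/8)*(1+ξ))) •
               ((Real.cos φ : ℂ) • X + (Real.sin φ : ℂ) • Z)) ^ k *
          e₀) 0 0)
      = (1/2) * (1 + Real.cos (k*(π/4)*(1+ξ))) +
        (Real.sin (k*(π/8)*(1+ξ)))^2 * (Real.sin φ)^2 := by
  rw [rot_pow_aux]
  have e1 : (k : ℝ) * (π / 4) * (1 + ξ) = 2 * (k * (π / 8 * (1 + ξ))) := by ring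
  have e2 : (k : ℝ) * (π / 8) * (1 + ξ) = k * (π / 8 * (1 + ξ)) := by ring
  rw [e1, e2, Real.cos_two_mul]
  generalize (k : ℝ) * (π / 8 * (1 + ξ)) = t
  simp [e₀, X, Z, Matrix.mul_apply, Fin.sum_univ_two, Complex.normSq_apply,
    -Complex.ofReal_cos, -Complex.ofReal_sin]
  ring
end
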